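/- Let q be a positive integer divisible by 4, N a positive integer divisible by 4, and c = 2c' with c' ∈ ℤ⁴. Then S_q(c) = Σ*_{a mod q} Σ_{b mod q, b∈(ℤ/q)⁴} e((a(F(b) − N) + b·c)/q) equals −4q² S(N, F(c'); q), where S(m,n;q) is the Kloosterman sum. -/

import Mathlib

open Finset

/-- `e(x) = exp(2πi x)`. -/
noncomputable def e (x : ℝ) : ℂ := Complex.exp (2 * Real.pi * Complex.I * x)

/-- The Kloosterman sum `S(m,n;q) = Σ_{x mod q, (x,q)=1} e((m x + n x̄)/q)`. -/
noncomputable def kloosterman (m n : ℤ) (q : ℕ) : ℂ :=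
  ∑ x ∈ (Finset.range q).filter (fun x => Nat.Coprime x q),
    e (((m * (x : ℤ) + n * ((((x : ZMod q)⁻¹).val : ℤ)) : ℤ) : ℝ) / q)

/-- The quadratic form `F(x) = x₁² + x₂² + x₃² + x₄²`. -/
def F (c : Fin 4 → ℤ) : ℤ := ∑ i, (c i) ^ 2

/-- The exponential sum `S_q(c) = Σ*_{a mod q} Σ_{b mod q, b ∈ (ℤ/q)⁴}
    e((a(F(b) - N) + b·c)/q)`. -/
noncomputable def Sq (q : ℕ) (N : ℤ) (c : Fin 4 → ℤ) : ℂ :=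
  ∑ a ∈ (Finset.range q).filter (fun a => Nat.Coprime a q),
    ∑ b : Fin 4 → Fin q,
      e ((((a : ℤ) * (F (fun i => ((b i : ℕ) : ℤ)) - N) +
            ∑ i, ((b i : ℕ) : ℤ) * c i : ℤ) : ℝ) / q)

/-- The quadratic Gauss sum `∑ x mod q, e(a x² / q)`. -/
noncomputable def quadGaussSum (q : ℕ) [NeZero q] (a : ZMod q) : ℂ :=
  ∑ x : ZMod q, ZMod.stdAddChar (a * x ^ 2)

lemma sum_range_natCast_zmod {q : ℕ} [NeZero q] (h : ZMod q → ℂ) :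
    ∑ i ∈ range q, h (i : ZMod q) = ∑ x : ZMod q, h x := by
  refine Finset.sum_bij' (fun i _ => (i : ZMod q)) (fun x _ => x.val) ?_ ?_ ?_ ?_ ?_
  · simp
  · intro x _
    simpa using ZMod.val_lt x
  · intro i hi
    exact ZMod.val_cast_of_lt (by simpa using hi)
  · simp
  · simp

lemma e_intCast_div (q : ℕ) [NeZero q] (n : ℤ) :
    e ((n : ℝ) / q) = ZMod.stdAddChar (n : ZMod q) := by
  rw [ZMod.stdAddChar_coe, e]
  congr 1
  push_cast
  ring

/-- Completing the square in a quadratic Gauss sum with a linear term. -/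
lemma sum_stdAddChar_quadratic {q : ℕ} [NeZero q] (a c : ZMod q) :
    ∑ x : ZMod q, ZMod.stdAddChar (a * x ^ 2 + 2 * (a * c) * x) =
      ZMod.stdAddChar (-(a * c ^ 2)) * quadGaussSum q a := by
  rw [quadGaussSum, Finset.mul_sum,
    ← Equiv.sum_comp (Equiv.addRight c) (fun x => _ * ZMod.stdAddChar (a * x ^ 2))]
  refine Finset.sum_congr rfl fun x _ => ?_
  rw [← AddChar.map_add_eq_mul, Equiv.coe_addRight]
  congr 1
  ring

lemma four_mul_natCast_eq_zero {q m : ℕ} (hq : q = 4 * m) : (4 * m : ZMod q) = 0 := by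
  have h : ((4 * m : ℕ) : ZMod q) = 0 := by rw [← hq, ZMod.natCast_self]
  exact_mod_cast h

lemma stdAddChar_two_mul_eq_neg_one {q m : ℕ} [NeZero q] (hq : q = 4 * m) :
    ZMod.stdAddChar (2 * m : ZMod q) = -1 := by
  have hz := four_mul_natCast_eq_zero hq
  have hsq : ZMod.stdAddChar (2 * m : ZMod q) ^ 2 = 1 := by
    rw [← AddChar.map_nsmul_eq_pow, nsmul_eq_mul,
      show ((2 : ℕ) : ZMod q) * (2 * m) = 0 by push_cast; linear_combination hz,
      AddChar.map_zero_eq_one]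
  refine (sq_eq_one_iff.mp hsq).resolve_left fun h => ?_
  rw [← AddChar.map_zero_eq_one (ZMod.stdAddChar (N := q)),
    ZMod.injective_stdAddChar.eq_iff] at h
  have h' : ((2 * m : ℕ) : ZMod q) = 0 := by exact_mod_cast h
  rw [ZMod.natCast_eq_zero_iff] at h'
  have hm : 0 < m := by have := NeZero.pos q; omega
  have := Nat.le_of_dvd (by omega) h'
  omega

/-- Multiplication by a sum of two squares does not change the square of a Gauss sum. -/
lemma quadGaussSum_sq_mul_of_sq_add_sq {q : ℕ} [NeZero q] (a u v : ZMod q)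
    (h : IsUnit (u ^ 2 + v ^ 2)) :
    quadGaussSum q ((u ^ 2 + v ^ 2) * a) ^ 2 = quadGaussSum q a ^ 2 := by
  obtain ⟨d, hd⟩ := h.exists_left_inv
  have key (b : ZMod q) : quadGaussSum q b ^ 2 =
      ∑ z : ZMod q × ZMod q, ZMod.stdAddChar (b * (z.1 ^ 2 + z.2 ^ 2)) := by
    simp only [quadGaussSum, sq (∑ x : ZMod q, _), Finset.sum_mul_sum, ← AddChar.map_add_eq_mul,
      Fintype.sum_prod_type, mul_add]
  let f : ZMod q × ZMod q ≃ ZMod q × ZMod q :=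
    { toFun := fun z => (u * z.1 - v * z.2, v * z.1 + u * z.2)
      invFun := fun z => (d * (u * z.1 + v * z.2), d * (u * z.2 - v * z.1))
      left_inv := fun z => by
        ext
        · linear_combination z.1 * hd
        · linear_combination z.2 * hd
      right_inv := fun z => by
        ext
        · linear_combination z.1 * hd
        · linear_combination z.2 * hd }
  rw [key, key, ← Equiv.sum_comp f fun z => ZMod.stdAddChar (a * (z.1 ^ 2 + z.2 ^ 2))]
  refine Finset.sum_congr rfl fun z _ => ?_
  congr 1
  simp only [f, Equiv.coe_fn_mk]
  ring

lemma quadGaussSum_sq_mul_of_mod_four_eq_one {q : ℕ} [NeZero q] (hq : 4 ∣ q) (a : ZMod q)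
    {t : ℕ} (ht : IsUnit (t : ZMod q)) (ht4 : t % 4 = 1) :
    quadGaussSum q (t * a) ^ 2 = quadGaussSum q a ^ 2 := by
  obtain ⟨p, -, hp, hpt⟩ := Nat.forall_exists_prime_gt_and_eq_mod ht 0
  have hp4 : p % 4 = t % 4 := ((ZMod.natCast_eq_natCast_iff _ _ _).mp hpt).of_dvd hq
  have := Fact.mk hp
  obtain ⟨u, v, huv⟩ := Nat.Prime.sq_add_sq (p := p) (by omega)
  have huv' : ((u : ZMod q) ^ 2 + (v : ZMod q) ^ 2) = t := by
    rw [← hpt, ← huv]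
    push_cast
    rfl
  rw [← huv'] at ht ⊢
  exact quadGaussSum_sq_mul_of_sq_add_sq a u v ht

lemma two_mul_mul_sq {q m : ℕ} [NeZero q] (hq : q = 4 * m) (x : ZMod q) :
    (2 * m : ZMod q) * x ^ 2 = 2 * m * x := by
  have hz := four_mul_natCast_eq_zero hq
  obtain ⟨n, rfl⟩ := ZMod.natCast_zmod_surjective x
  obtain ⟨r, hr⟩ := Nat.even_mul_succ_self n
  have hr' : (n : ZMod q) * (n + 1) = r + r := by
    exact_mod_cast congrArg (Nat.cast (R := ZMod q)) hr
  linear_combination (2 * m : ZMod q) * hr' + (r - n) * hz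

lemma quadGaussSum_add_half {q m : ℕ} {k : ℤ} [NeZero q] (hq : q = 4 * m) (hk : Odd k) :
    quadGaussSum q (k + 2 * m) =
      ZMod.stdAddChar (-(k * m ^ 2 : ZMod q)) * quadGaussSum q k := by
  have hz := four_mul_natCast_eq_zero hq
  obtain ⟨j, rfl⟩ := hk
  rw [← sum_stdAddChar_quadratic, quadGaussSum]
  refine Finset.sum_congr rfl fun x _ => ?_
  congr 1
  push_cast
  linear_combination two_mul_mul_sq hq x - j * x * hz

/-- The case `q ≡ 4 mod 8` of `quadGaussSum_neg_sq`. -/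
lemma quadGaussSum_neg_sq_of_odd {q m k : ℕ} [NeZero q] (hq : q = 4 * m) (hm : Odd m)
    (hk : Odd k) : quadGaussSum q (-k) ^ 2 = -quadGaussSum q k ^ 2 := by
  have hz := four_mul_natCast_eq_zero hq
  have hhalf := quadGaussSum_add_half (k := k) hq (by exact_mod_cast hk)
  push_cast at hhalf
  obtain ⟨s, hs⟩ := hk.mul hm
  obtain ⟨j, hj⟩ := hk
  obtain ⟨l, hl⟩ := hm
  have hs' : (k * m : ZMod q) = 2 * s + 1 := by exact_mod_cast congrArg (Nat.cast (R := ZMod q)) hs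
  have hj' : (k : ZMod q) = 2 * j + 1 := by exact_mod_cast congrArg (Nat.cast (R := ZMod q)) hj
  have hl' : (m : ZMod q) = 2 * l + 1 := by exact_mod_cast congrArg (Nat.cast (R := ZMod q)) hl
  have ht : ((4 * l + 1 : ℕ) : ZMod q) = 2 * m - 1 := by push_cast; linear_combination -2 * hl'
  have hu : IsUnit ((4 * l + 1 : ℕ) : ZMod q) := by
    rw [ht]
    exact IsUnit.of_mul_eq_one (2 * m - 1 : ZMod q) (by linear_combination (m - 1) * hz)
  have h1 := quadGaussSum_sq_mul_of_mod_four_eq_one (Dvd.intro _ hq.symm) (k + 2 * m : ZMod q) hu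
    (by omega)
  rw [ht, show (2 * m - 1 : ZMod q) * (k + 2 * m) = -k by
    linear_combination 2 * m * hj' + (j + m) * hz,
    hhalf, mul_pow, ← AddChar.map_nsmul_eq_pow, nsmul_eq_mul,
    show ((2 : ℕ) : ZMod q) * -(k * m ^ 2) = 2 * m by
      push_cast; linear_combination -2 * m * hs' - (s + 1) * hz,
    stdAddChar_two_mul_eq_neg_one hq] at h1
  rw [h1]
  ring

/-- The case `q ≡ 8 mod 16` of `quadGaussSum_neg_sq`. -/
lemma quadGaussSum_neg_sq_of_eight_mul_odd {q m k : ℕ} [NeZero q] (hq : q = 8 * m) (hm : Odd m)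
    (hk : Odd k) : quadGaussSum q (-k) ^ 2 = -quadGaussSum q k ^ 2 := by
  have hq' : q = 4 * (2 * m) := by omega
  have hz := four_mul_natCast_eq_zero hq'
  have hneg := stdAddChar_two_mul_eq_neg_one hq'
  have hhalf := quadGaussSum_add_half (k := k) hq' (by exact_mod_cast hk)
  push_cast at hz hneg hhalf
  obtain ⟨s, hs⟩ := hk.mul hm
  have hk' := hk
  obtain ⟨j, hj⟩ := hk'
  obtain ⟨l, hl⟩ := hm
  have hs' : (k * m : ZMod q) = 2 * s + 1 := by exact_mod_cast congrArg (Nat.cast (R := ZMod q)) hs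
  have hj' : (k : ZMod q) = 2 * j + 1 := by exact_mod_cast congrArg (Nat.cast (R := ZMod q)) hj
  have hl' : (m : ZMod q) = 2 * l + 1 := by exact_mod_cast congrArg (Nat.cast (R := ZMod q)) hl
  rw [show (-(k * (2 * m) ^ 2) : ZMod q) = 2 * (2 * m) by
    linear_combination -4 * m * hs' - (s + 1) * hz, hneg] at hhalf
  set w : ℂ := ZMod.stdAddChar (2 * m * k : ZMod q) with hw
  have hw2 : w ^ 2 = -1 := by
    rw [hw, ← AddChar.map_nsmul_eq_pow, nsmul_eq_mul, ← hneg]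
    congr 1
    push_cast
    linear_combination 4 * m * hj' + j * hz
  have hchar (x : ZMod q) : ZMod.stdAddChar (2 * m * k * x ^ 2 : ZMod q) =
      (1 + w) / 2 + (1 - w) / 2 * ZMod.stdAddChar (2 * (2 * m) * x ^ 2 : ZMod q) := by
    obtain ⟨n, rfl⟩ := ZMod.natCast_zmod_surjective x
    rcases Nat.even_or_odd' n with ⟨y, rfl | rfl⟩
    · rw [show (2 * m * k * ((2 * y : ℕ) : ZMod q) ^ 2) = 0 by
        push_cast; linear_combination k * y ^ 2 * hz,
        show (2 * (2 * m) * ((2 * y : ℕ) : ZMod q) ^ 2) = 0 by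
        push_cast; linear_combination 2 * y ^ 2 * hz, AddChar.map_zero_eq_one]
      ring
    · rw [show (2 * m * k * ((2 * y + 1 : ℕ) : ZMod q) ^ 2) = 2 * m * k by
        push_cast; linear_combination (k * (y ^ 2 + y)) * hz,
        show (2 * (2 * m) * ((2 * y + 1 : ℕ) : ZMod q) ^ 2) = 2 * (2 * m) by
        push_cast; linear_combination 2 * (y ^ 2 + y) * hz, hneg, ← hw]
      ring
  have hquarter : quadGaussSum q (k + 2 * m * k) = w * quadGaussSum q k := by
    have h : quadGaussSum q (k + 2 * m * k) = (1 + w) / 2 * quadGaussSum q k +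
        (1 - w) / 2 * quadGaussSum q (k + 2 * (2 * m)) := by
      simp only [quadGaussSum, Finset.mul_sum, ← Finset.sum_add_distrib]
      refine Finset.sum_congr rfl fun x _ => ?_
      rw [add_mul, add_mul, AddChar.map_add_eq_mul, AddChar.map_add_eq_mul, hchar]
      ring
    rw [h, hhalf]
    ring
  have ht : ((12 * l + 5 : ℕ) : ZMod q) = -(1 + 2 * m) := by
    push_cast; linear_combination -6 * hl' + hz
  have hu : IsUnit ((12 * l + 5 : ℕ) : ZMod q) := by
    rw [ht]
    exact IsUnit.of_mul_eq_one (-(1 + 2 * m) : ZMod q)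
      (by linear_combination 4 * m * hl' + (l + 1) * hz)
  have h1 := quadGaussSum_sq_mul_of_mod_four_eq_one (Dvd.intro _ hq'.symm)
    (k + 2 * m * k : ZMod q) hu (by omega)
  rw [ht, show -(1 + 2 * m : ZMod q) * (k + 2 * m * k) = -k by
    linear_combination -4 * k * m * hl' - k * (l + 1) * hz, hquarter, mul_pow, hw2] at h1
  rw [h1]
  ring

lemma sum_range_two_mul (f : ℕ → ℂ) (n : ℕ) :
    ∑ i ∈ range (2 * n), f i = ∑ i ∈ range n, (f (2 * i) + f (2 * i + 1)) := by
  induction n with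
  | zero => simp
  | succ n ih =>
    rw [show 2 * (n + 1) = 2 * n + 1 + 1 by ring, Finset.sum_range_succ, Finset.sum_range_succ,
      Finset.sum_range_succ, ih]
    ring

/-- Reduction of the modulus by a factor `4`. -/
lemma quadGaussSum_eq_two_mul {q n : ℕ} [NeZero q] [NeZero n] (hq : q = 4 * n) (hn : 4 ∣ n)
    {k : ℤ} (hk : Odd k) : quadGaussSum q k = 2 * quadGaussSum n k := by
  have hz := four_mul_natCast_eq_zero hq
  have hneg := stdAddChar_two_mul_eq_neg_one hq
  have hhalf : quadGaussSum q (k + 2 * n) = quadGaussSum q k := by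
    obtain ⟨l, hl⟩ := hn
    have hl' : (n : ZMod q) = 4 * l := by exact_mod_cast congrArg (Nat.cast (R := ZMod q)) hl
    rw [quadGaussSum_add_half hq hk, show (-(k * n ^ 2) : ZMod q) = 0 by
      linear_combination (-k * n) * hl' - k * l * hz, AddChar.map_zero_eq_one, one_mul]
  have heven (i : ℕ) : ZMod.stdAddChar ((k : ZMod q) * ((2 * i : ℕ) : ZMod q) ^ 2) =
      ZMod.stdAddChar ((k : ZMod n) * (i : ZMod n) ^ 2) := by
    have h1 : (k : ZMod q) * ((2 * i : ℕ) : ZMod q) ^ 2 = ((4 * (k * i ^ 2) : ℤ) : ZMod q) := by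
      push_cast; ring
    have h2 : (k : ZMod n) * (i : ZMod n) ^ 2 = ((k * i ^ 2 : ℤ) : ZMod n) := by
      push_cast; ring
    have hn0 : (n : ℂ) ≠ 0 := Nat.cast_ne_zero.mpr (NeZero.ne n)
    rw [h1, h2, ZMod.stdAddChar_coe, ZMod.stdAddChar_coe, hq]
    congr 1
    push_cast
    field_simp
  have hx (x : ZMod q) : ZMod.stdAddChar ((k + 2 * n) * x ^ 2 : ZMod q) =
      ZMod.stdAddChar (k * x ^ 2 : ZMod q) * ZMod.stdAddChar (2 * n * x : ZMod q) := by
    rw [add_mul, AddChar.map_add_eq_mul, two_mul_mul_sq hq]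
  have hchar0 (i : ℕ) : ZMod.stdAddChar (2 * n * ((2 * i : ℕ) : ZMod q) : ZMod q) = 1 := by
    rw [show (2 * n * ((2 * i : ℕ) : ZMod q)) = 0 by push_cast; linear_combination i * hz,
      AddChar.map_zero_eq_one]
  have hchar1 (i : ℕ) : ZMod.stdAddChar (2 * n * ((2 * i + 1 : ℕ) : ZMod q) : ZMod q) = -1 := by
    rw [show (2 * n * ((2 * i + 1 : ℕ) : ZMod q)) = 2 * n by
      push_cast; linear_combination i * hz, hneg]
  have hG : 2 * quadGaussSum q k =
      ∑ i ∈ range (2 * n), 2 * ZMod.stdAddChar ((k : ZMod n) * (i : ZMod n) ^ 2) := by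
    calc 2 * quadGaussSum q k = quadGaussSum q k + quadGaussSum q (k + 2 * n) := by
          rw [hhalf]; ring
      _ = ∑ i ∈ range (2 * (2 * n)), (ZMod.stdAddChar ((k : ZMod q) * (i : ZMod q) ^ 2) +
            ZMod.stdAddChar ((k : ZMod q) * (i : ZMod q) ^ 2) *
              ZMod.stdAddChar (2 * n * i : ZMod q)) := by
          rw [show 2 * (2 * n) = q by omega,
            sum_range_natCast_zmod fun x : ZMod q => ZMod.stdAddChar (k * x ^ 2 : ZMod q) +
              ZMod.stdAddChar (k * x ^ 2 : ZMod q) * ZMod.stdAddChar (2 * n * x : ZMod q),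
            Finset.sum_add_distrib]
          simp only [quadGaussSum, hx]
      _ = _ := by
          rw [sum_range_two_mul]
          refine Finset.sum_congr rfl fun i _ => ?_
          rw [hchar0, hchar1, heven]
          ring
  rw [two_mul n, Finset.sum_range_add] at hG
  simp only [Nat.cast_add, ZMod.natCast_self, zero_add, ← Finset.mul_sum] at hG
  rw [sum_range_natCast_zmod fun x : ZMod n => ZMod.stdAddChar (k * x ^ 2 : ZMod n)] at hG
  rw [quadGaussSum.eq_1 n]
  linear_combination hG / 2

lemma quadGaussSum_neg_sq {q : ℕ} [inst : NeZero q] (hq : 4 ∣ q) {k : ℕ} (hk : Odd k) :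
    quadGaussSum q (-k) ^ 2 = -quadGaussSum q k ^ 2 := by
  revert inst
  induction q using Nat.strong_induction_on with
  | _ q ih =>
  intro _
  obtain ⟨n, rfl⟩ := hq
  have hq0 := NeZero.ne (4 * n)
  by_cases hn : 4 ∣ n
  · have : NeZero n := ⟨by omega⟩
    have h := ih n (by omega) hn
    have h1 := quadGaussSum_eq_two_mul rfl hn (k := k) (by exact_mod_cast hk)
    have h2 := quadGaussSum_eq_two_mul rfl hn (k := -k) (by simpa using hk)
    push_cast at h1 h2
    rw [h1, h2, mul_pow, h]
    ring
  · rcases Nat.even_or_odd' n with ⟨m, rfl | rfl⟩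
    · exact quadGaussSum_neg_sq_of_eight_mul_odd (m := m) (by ring)
        (by rw [Nat.odd_iff]; omega) hk
    · exact quadGaussSum_neg_sq_of_odd rfl ⟨m, rfl⟩ hk

lemma quadGaussSum_mul_neg {q : ℕ} [NeZero q] (hq : 4 ∣ q) {a : ZMod q} (ha : IsUnit a) :
    quadGaussSum q a * quadGaussSum q (-a) = 2 * q := by
  obtain ⟨n, hn⟩ := hq
  have hz := four_mul_natCast_eq_zero hn
  have hne : (2 * n : ZMod q) ≠ 0 := fun h => by
    have h1 := stdAddChar_two_mul_eq_neg_one hn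
    rw [h, AddChar.map_zero_eq_one] at h1
    norm_num at h1
  have hiff (h : ZMod q) : 2 * (a * h) = 0 ↔ h = 0 ∨ h = 2 * n := by
    constructor
    · intro h0
      have h2 : 2 * h = 0 := ha.mul_left_cancel (by linear_combination h0)
      obtain ⟨i, hi, rfl⟩ : ∃ i < q, (i : ZMod q) = h := ⟨h.val, h.val_lt, by simp⟩
      have h3 : ((2 * i : ℕ) : ZMod q) = 0 := by exact_mod_cast h2
      rw [ZMod.natCast_eq_zero_iff] at h3
      obtain ⟨r, hr⟩ := h3
      have hr2 : r < 2 := by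
        by_contra! hr2
        have := Nat.mul_le_mul_left q hr2
        omega
      interval_cases r
      · left
        rw [show i = 0 by omega, Nat.cast_zero]
      · right
        rw [show i = 2 * n by omega]
        push_cast
        rfl
    · rintro (rfl | rfl)
      · ring
      · linear_combination a * hz
  have hsum (h : ZMod q) : ∑ y : ZMod q, ZMod.stdAddChar (a * h ^ 2 + 2 * (a * h) * y) =
      (if h = 0 then (q : ℂ) else 0) + if h = 2 * n then (q : ℂ) else 0 := by
    simp only [AddChar.map_add_eq_mul, ← Finset.mul_sum, mul_comm (2 * (a * h))]
    rw [AddChar.sum_mulShift _ (ZMod.isPrimitive_stdAddChar q), ZMod.card]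
    by_cases h0 : h = 0
    · simp [h0, hne.symm]
    · by_cases h1 : h = 2 * n
      · have h2 : a * h ^ 2 = 0 := by rw [h1]; linear_combination a * n * hz
        rw [if_pos ((hiff h).mpr (Or.inr h1)), if_neg h0, if_pos h1, h2, AddChar.map_zero_eq_one]
        simp
      · rw [if_neg (by rw [hiff]; tauto), if_neg h0, if_neg h1]
        simp
  calc quadGaussSum q a * quadGaussSum q (-a)
      = ∑ y : ZMod q, ∑ x : ZMod q, ZMod.stdAddChar (a * x ^ 2 + -a * y ^ 2) := by
        simp only [quadGaussSum, Finset.sum_mul_sum, AddChar.map_add_eq_mul]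
        exact Finset.sum_comm
    _ = ∑ y : ZMod q, ∑ h : ZMod q, ZMod.stdAddChar (a * h ^ 2 + 2 * (a * h) * y) := by
        refine Finset.sum_congr rfl fun y _ => ?_
        rw [← Equiv.sum_comp (Equiv.addRight y)]
        refine Finset.sum_congr rfl fun h _ => ?_
        rw [Equiv.coe_addRight]
        congr 1
        ring
    _ = 2 * q := by
        rw [Finset.sum_comm]
        simp only [hsum, Finset.sum_add_distrib, Finset.sum_ite_eq', Finset.mem_univ, if_true]
        ring

lemma quadGaussSum_pow_four {q : ℕ} [NeZero q] (hq : 4 ∣ q) {a : ZMod q} (ha : IsUnit a) :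
    quadGaussSum q a ^ 4 = -4 * (q : ℂ) ^ 2 := by
  have hmul := quadGaussSum_mul_neg hq ha
  obtain ⟨k, rfl⟩ := ZMod.natCast_zmod_surjective a
  have hk : Odd k := by
    rw [ZMod.isUnit_iff_coprime] at ha
    exact (Nat.Coprime.of_dvd_right (Dvd.dvd.trans (by norm_num) hq) ha).odd_of_right
  have h := quadGaussSum_neg_sq hq hk
  linear_combination (-(quadGaussSum q k * quadGaussSum q (-k)) - 2 * q) * hmul +
    quadGaussSum q k ^ 2 * h

lemma sum_filter_coprime_range {q : ℕ} [NeZero q] (h : ZMod q → ℂ) :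
    ∑ a ∈ (range q).filter (fun a => Nat.Coprime a q), h (a : ZMod q) =
      ∑ u : (ZMod q)ˣ, h (u : ZMod q) := by
  refine (Finset.sum_bij' (fun (u : (ZMod q)ˣ) _ => (u : ZMod q).val)
    (fun a ha => ZMod.unitOfCoprime a (Finset.mem_filter.mp ha).2) ?_ ?_ ?_ ?_ ?_).symm
  · intro u _
    simpa [ZMod.val_lt] using ZMod.val_coe_unit_coprime u
  · simp
  · intro u _
    ext
    simp
  · intro a ha
    simpa using ZMod.val_cast_of_lt (Finset.mem_range.mp (Finset.mem_filter.mp ha).1)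
  · simp

lemma stdAddChar_sum {q : ℕ} [NeZero q] {ι : Type*} (s : Finset ι) (f : ι → ZMod q) :
    ZMod.stdAddChar (∑ i ∈ s, f i) = ∏ i ∈ s, ZMod.stdAddChar (f i) := by
  classical
  induction s using Finset.induction_on with
  | empty => simp
  | insert i s hi ih => rw [Finset.sum_insert hi, Finset.prod_insert hi, AddChar.map_add_eq_mul, ih]

lemma sum_prod_stdAddChar_quadratic {q : ℕ} [NeZero q] {a : ZMod q} (ha : IsUnit a)
    (c : Fin 4 → ZMod q) :
    ∑ b : Fin 4 → Fin q, ∏ i, ZMod.stdAddChar (a * ((b i : ℕ) : ZMod q) ^ 2 +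
      2 * c i * ((b i : ℕ) : ZMod q)) =
      ZMod.stdAddChar (-(a⁻¹ * ∑ i, c i ^ 2)) * quadGaussSum q a ^ 4 := by
  have hinv := ZMod.mul_inv_of_unit a ha
  rw [← Fintype.piFinset_univ, ← Finset.prod_univ_sum (fun _ : Fin 4 => (univ : Finset (Fin q)))
    (fun i j => ZMod.stdAddChar (a * ((j : ℕ) : ZMod q) ^ 2 + 2 * c i * ((j : ℕ) : ZMod q)))]
  have hone (i : Fin 4) : ∑ j : Fin q, ZMod.stdAddChar (a * ((j : ℕ) : ZMod q) ^ 2 +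
      2 * c i * ((j : ℕ) : ZMod q)) =
      ZMod.stdAddChar (-(a⁻¹ * c i ^ 2)) * quadGaussSum q a := by
    rw [Fin.sum_univ_eq_sum_range (fun j => ZMod.stdAddChar (a * (j : ZMod q) ^ 2 +
      2 * c i * (j : ZMod q))), sum_range_natCast_zmod
      (fun x => ZMod.stdAddChar (a * x ^ 2 + 2 * c i * x)),
      show a⁻¹ * c i ^ 2 = a * (a⁻¹ * c i) ^ 2 by linear_combination -a⁻¹ * c i ^ 2 * hinv,
      ← sum_stdAddChar_quadratic]
    simp only [← mul_assoc a a⁻¹, hinv, one_mul]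
  simp only [hone, Finset.prod_mul_distrib, Finset.prod_const, Finset.card_univ, Fintype.card_fin]
  rw [← stdAddChar_sum, Finset.sum_neg_distrib, Finset.mul_sum]

theorem stmt_4 (q N : ℕ) (hq0 : 0 < q) (hN0 : 0 < N) (hq4 : 4 ∣ q) (hN4 : 4 ∣ N)
    (c' : Fin 4 → ℤ) :
    Sq q (N : ℤ) (fun i => 2 * c' i) =
      -4 * (q : ℂ) ^ 2 * kloosterman (N : ℤ) (F c') q := by
  have : NeZero q := ⟨hq0.ne'⟩
  have hinner (a : ℕ) (ha : Nat.Coprime a q) : ∑ b : Fin 4 → Fin q,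
      e ((((a : ℤ) * (F (fun i => ((b i : ℕ) : ℤ)) - (N : ℤ)) +
        ∑ i, ((b i : ℕ) : ℤ) * (2 * c' i) : ℤ) : ℝ) / q) =
      -4 * (q : ℂ) ^ 2 *
        ZMod.stdAddChar (N * -(a : ZMod q) + (F c' : ZMod q) * (-(a : ZMod q))⁻¹ : ZMod q) := by
    have hu : IsUnit (a : ZMod q) := (ZMod.isUnit_iff_coprime a q).mpr ha
    have hinv : (-(a : ZMod q))⁻¹ = -(a : ZMod q)⁻¹ := by
      refine hu.neg.mul_left_cancel ?_
      rw [ZMod.mul_inv_of_unit _ hu.neg, neg_mul_neg, ZMod.mul_inv_of_unit _ hu]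
    rw [← quadGaussSum_pow_four hq4 hu, hinv, AddChar.map_add_eq_mul]
    have hF : (F c' : ZMod q) * -(a : ZMod q)⁻¹ =
        -((a : ZMod q)⁻¹ * ∑ i, (c' i : ZMod q) ^ 2) := by
      simp only [F]
      push_cast
      ring
    rw [hF, mul_left_comm, mul_comm (quadGaussSum q a ^ 4),
      ← sum_prod_stdAddChar_quadratic hu, Finset.mul_sum]
    refine Finset.sum_congr rfl fun b _ => ?_
    rw [e_intCast_div, ← stdAddChar_sum, ← AddChar.map_add_eq_mul]
    congr 1
    simp only [F]
    push_cast
    simp only [Fin.sum_univ_four]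
    ring
  have hS : Sq q (N : ℤ) (fun i => 2 * c' i) = ∑ u : (ZMod q)ˣ, -4 * (q : ℂ) ^ 2 *
      ZMod.stdAddChar (N * -(u : ZMod q) + (F c' : ZMod q) * (-(u : ZMod q))⁻¹ : ZMod q) := by
    rw [Sq, ← sum_filter_coprime_range (fun x : ZMod q => -4 * (q : ℂ) ^ 2 *
      ZMod.stdAddChar (N * -x + (F c' : ZMod q) * (-x)⁻¹ : ZMod q))]
    exact Finset.sum_congr rfl fun a ha => hinner a (Finset.mem_filter.mp ha).2
  have hK : kloosterman (N : ℤ) (F c') q = ∑ u : (ZMod q)ˣ,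
      ZMod.stdAddChar (N * (u : ZMod q) + (F c' : ZMod q) * (u : ZMod q)⁻¹ : ZMod q) := by
    rw [kloosterman, ← sum_filter_coprime_range (fun x : ZMod q =>
      ZMod.stdAddChar (N * x + (F c' : ZMod q) * x⁻¹ : ZMod q))]
    refine Finset.sum_congr rfl fun a _ => ?_
    rw [e_intCast_div]
    simp
  rw [hS, hK, Finset.mul_sum, ← Equiv.sum_comp (Equiv.neg (ZMod q)ˣ)]
  simp
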